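/- Let μ be an n-Ahlfors regular measure on ℝ^{n+1} with compact support X, 1 < p < ∞ and 1 ≤ q ≤ p. Then the space of Lipschitz functions on X with zero μ-mean is dense in the space of L^{p,q}(μ)-functions with zero μ-mean. -/

import Mathlib

open MeasureTheory Metric Set ENNReal NNReal

noncomputable section

/-- The support of a measure on a metric space. -/
def msupport {X : Type*} [MetricSpace X] [MeasurableSpace X] (μ : Measure X) : Set X :=
  {x | ∀ r : ℝ, 0 < r → 0 < μ (ball x r)}

/-- `μ` is `n`-Ahlfors regular with constant `C₀`:
`C₀⁻¹ r^n ≤ μ(B(x,r)) ≤ C₀ r^n` for `x ∈ supp μ` and `0 < r ≤ diam (supp μ)`. -/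
def IsAhlforsRegular {X : Type*} [MetricSpace X] [MeasurableSpace X]
    (μ : Measure X) (n : ℕ) (C₀ : ℝ) : Prop :=
  1 ≤ C₀ ∧ ∀ x ∈ msupport μ, ∀ r : ℝ, 0 < r → r ≤ Metric.diam (msupport μ) →
    ENNReal.ofReal (C₀⁻¹ * r ^ n) ≤ μ (closedBall x r) ∧
      μ (closedBall x r) ≤ ENNReal.ofReal (C₀ * r ^ n)

variable {α : Type*} [MeasurableSpace α]

/-- Distribution function `d_f(λ) = μ {|f| > λ}`. -/
def distFun (μ : Measure α) (f : α → ℝ) (lam : ℝ) : ℝ≥0∞ := μ {x | lam < |f x|}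

/-- Decreasing rearrangement `f*(t) = inf {λ ≥ 0 : d_f(λ) ≤ t}`. -/
def decRearr (μ : Measure α) (f : α → ℝ) (t : ℝ) : ℝ :=
  sInf {lam : ℝ | 0 ≤ lam ∧ distFun μ f lam ≤ ENNReal.ofReal t}

/-- Lorentz quasinorm `‖f‖_{L^{p,q}(μ)} = (∫₀^∞ (t^{1/p} f*(t))^q dt/t)^{1/q}` (finite `q`). -/
def lorentzNorm (μ : Measure α) (f : α → ℝ) (p q : ℝ) : ℝ≥0∞ :=
  (∫⁻ t in Set.Ioi (0 : ℝ),
      (ENNReal.ofReal (t ^ (1 / p) * decRearr μ f t)) ^ q / ENNReal.ofReal t) ^ (1 / q)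

section Rearrangement

variable {μ : Measure α} {f g u v : α → ℝ} {t : ℝ}

lemma decRearr_nonneg : 0 ≤ decRearr μ f t :=
  Real.sInf_nonneg fun _ h => h.1

lemma decRearr_le {lam : ℝ} (h0 : 0 ≤ lam) (h : distFun μ f lam ≤ ENNReal.ofReal t) :
    decRearr μ f t ≤ lam :=
  csInf_le ⟨0, fun _ h => h.1⟩ ⟨h0, h⟩

lemma distFun_integral_div_le (hf : Integrable f μ) (ht : 0 < t) :
    distFun μ f ((∫ x, |f x| ∂μ) / t) ≤ ENNReal.ofReal t := by
  set J := ∫ x, |f x| ∂μ with hJ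
  have hJ0 : 0 ≤ J := integral_nonneg fun _ => abs_nonneg _
  rcases hJ0.eq_or_lt with h | h
  · have h0 : (fun x => |f x|) =ᵐ[μ] 0 :=
      (integral_eq_zero_iff_of_nonneg (fun _ => abs_nonneg _) hf.abs).1 h.symm
    have : distFun μ f (J / t) = 0 := by
      refine measure_mono_null (fun x hx => ?_) h0
      rw [← h, zero_div] at hx
      exact hx.ne'
    simp [this]
  · have hc := mul_meas_ge_le_lintegral₀ (μ := μ) (f := fun x => ENNReal.ofReal |f x|)
      hf.abs.aemeasurable.ennreal_ofReal (ENNReal.ofReal (J / t))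
    rw [← ofReal_integral_eq_lintegral_ofReal hf.abs (.of_forall fun _ => abs_nonneg _),
      ← hJ] at hc
    have hpos : 0 < J / t := div_pos h ht
    have hle : distFun μ f (J / t)
        ≤ μ {x | ENNReal.ofReal (J / t) ≤ ENNReal.ofReal |f x|} :=
      measure_mono fun x (hx : J / t < |f x|) => ENNReal.ofReal_le_ofReal hx.le
    refine hle.trans ?_
    have h1 : ENNReal.ofReal (J / t) * ENNReal.ofReal t = ENNReal.ofReal J := by
      rw [← ENNReal.ofReal_mul hpos.le, div_mul_cancel₀ _ ht.ne']
    rw [← h1] at hc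
    exact (ENNReal.mul_le_mul_iff_right (by simpa using hpos) ENNReal.ofReal_ne_top).1 hc

lemma decRearr_le_integral_div (hf : Integrable f μ) (ht : 0 < t) :
    decRearr μ f t ≤ (∫ x, |f x| ∂μ) / t :=
  decRearr_le (div_nonneg (integral_nonneg fun _ => abs_nonneg _) ht.le)
    (distFun_integral_div_le hf ht)

lemma decRearr_set_nonempty (hf : Integrable f μ) (ht : 0 < t) :
    {lam : ℝ | 0 ≤ lam ∧ distFun μ f lam ≤ ENNReal.ofReal t}.Nonempty :=
  ⟨_, div_nonneg (integral_nonneg fun _ => abs_nonneg _) ht.le, distFun_integral_div_le hf ht⟩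

lemma antitoneOn_decRearr (hf : Integrable f μ) : AntitoneOn (decRearr μ f) (Ioi 0) :=
  fun _ hs _ _ hst => csInf_le_csInf ⟨0, fun _ h => h.1⟩ (decRearr_set_nonempty hf hs)
    fun _ h => ⟨h.1, h.2.trans (ENNReal.ofReal_le_ofReal hst)⟩

lemma decRearr_mono (hg : Integrable g μ) (ht : 0 < t) (h : ∀ x, |f x| ≤ |g x|) :
    decRearr μ f t ≤ decRearr μ g t :=
  csInf_le_csInf ⟨0, fun _ h => h.1⟩ (decRearr_set_nonempty hg ht) fun _ hl =>
    ⟨hl.1, (measure_mono fun x hx => lt_of_lt_of_le hx (h x)).trans hl.2⟩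

lemma distFun_add_le (a b : ℝ) : distFun μ (u + v) (a + b) ≤ distFun μ u a + distFun μ v b := by
  refine (measure_mono fun x (hx : a + b < |u x + v x|) => ?_).trans (measure_union_le _ _)
  by_contra hcon
  simp only [mem_union, mem_ofPred_eq, not_or, not_lt] at hcon
  linarith [abs_add_le (u x) (v x)]

lemma decRearr_add_le (hu : Integrable u μ) (hv : Integrable v μ) (ht : 0 < t) :
    decRearr μ (u + v) t ≤ decRearr μ u (t / 2) + decRearr μ v (t / 2) := by
  have ht2 : 0 < t / 2 := half_pos ht
  have hbdd : ∀ w : α → ℝ, BddBelow {lam : ℝ | 0 ≤ lam ∧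
      distFun μ w lam ≤ ENNReal.ofReal (t / 2)} := fun _ => ⟨0, fun _ h => h.1⟩
  unfold decRearr
  rw [← csInf_add (decRearr_set_nonempty hu ht2) (hbdd u) (decRearr_set_nonempty hv ht2) (hbdd v)]
  refine csInf_le_csInf ⟨0, fun _ h => h.1⟩
    ((decRearr_set_nonempty hu ht2).add (decRearr_set_nonempty hv ht2)) ?_
  rintro _ ⟨a, ha, b, hb, rfl⟩
  refine ⟨add_nonneg ha.1 hb.1, (distFun_add_le a b).trans ((add_le_add ha.2 hb.2).trans ?_)⟩
  rw [← ENNReal.ofReal_add ht2.le ht2.le, add_halves]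

/-- The rearrangement of a bounded function is bounded and vanishes beyond the total mass. -/
lemma decRearr_le_indicator [IsFiniteMeasure μ] {B : ℝ} (hB : 0 ≤ B) (h : ∀ x, |f x| ≤ B) :
    decRearr μ f t ≤ (Iio (μ.real univ)).indicator (fun _ => B) t := by
  by_cases ht : t < μ.real univ
  · rw [indicator_of_mem (mem_Iio.2 ht)]
    refine decRearr_le hB ?_
    have : {x | B < |f x|} = ∅ := by
      ext x
      simpa using h x
    simp [distFun, this]
  · rw [indicator_of_notMem (by simpa using ht)]
    refine decRearr_le le_rfl ((measure_mono (subset_univ _)).trans ?_)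
    rw [← ofReal_measureReal]
    exact ENNReal.ofReal_le_ofReal (not_lt.1 ht)

end Rearrangement

section Modular

/-- The integrand `(t^{1/p} y)^q / t` of the Lorentz quasinorm. -/
def lorentzIntegrand (p q t y : ℝ) : ℝ≥0∞ :=
  (ENNReal.ofReal (t ^ (1 / p) * y)) ^ q / ENNReal.ofReal t

/-- The `q`-th power of the Lorentz quasinorm. -/
def lorentzModular (μ : Measure α) (f : α → ℝ) (p q : ℝ) : ℝ≥0∞ :=
  ∫⁻ t in Ioi (0 : ℝ), lorentzIntegrand p q t (decRearr μ f t)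

variable {μ : Measure α} {f u v : α → ℝ} {p q t : ℝ}

lemma lorentzNorm_eq_lorentzModular_rpow :
    lorentzNorm μ f p q = lorentzModular μ f p q ^ (1 / q) := rfl

lemma lorentzIntegrand_mono (hq : 0 ≤ q) (ht : 0 ≤ t) {y z : ℝ} (h : y ≤ z) :
    lorentzIntegrand p q t y ≤ lorentzIntegrand p q t z := by
  unfold lorentzIntegrand
  gcongr

lemma lorentzIntegrand_add_le (hq : 1 ≤ q) (ht : 0 ≤ t) {y z : ℝ} (hy : 0 ≤ y) (hz : 0 ≤ z) :
    lorentzIntegrand p q t (y + z)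
      ≤ 2 ^ (q - 1) * (lorentzIntegrand p q t y + lorentzIntegrand p q t z) := by
  unfold lorentzIntegrand
  have h0 : 0 ≤ t ^ (1 / p) := Real.rpow_nonneg ht _
  rw [mul_add, ENNReal.ofReal_add (by positivity) (by positivity), ← ENNReal.add_div,
    ← mul_div_assoc]
  gcongr
  exact ENNReal.rpow_add_le_mul_rpow_add_rpow _ _ hq

lemma aemeasurable_lorentzIntegrand_decRearr (hf : Integrable f μ) :
    AEMeasurable (fun t => lorentzIntegrand p q t (decRearr μ f t))
      (volume.restrict (Ioi 0)) := by
  have h := aemeasurable_restrict_of_antitoneOn (μ := volume) measurableSet_Ioi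
    (antitoneOn_decRearr hf)
  unfold lorentzIntegrand
  fun_prop

lemma setLIntegral_Ioi_comp_half (F : ℝ → ℝ≥0∞) :
    ∫⁻ t in Ioi (0 : ℝ), F (t / 2) = 2 * ∫⁻ t in Ioi (0 : ℝ), F t := by
  have h2 : (2⁻¹ : ℝ) ≠ 0 := by norm_num
  have h := lintegral_map_equiv (μ := volume) ((Ioi (0 : ℝ)).indicator F)
    (Homeomorph.mulRight₀ (2⁻¹ : ℝ) h2).toMeasurableEquiv
  have hmap : Measure.map (Homeomorph.mulRight₀ (2⁻¹ : ℝ) h2).toMeasurableEquiv volume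
      = (2 : ℝ≥0∞) • volume := by
    have := Real.map_volume_mul_right h2
    simpa using this
  rw [hmap, lintegral_smul_measure, lintegral_indicator measurableSet_Ioi, smul_eq_mul] at h
  rw [h, ← lintegral_indicator measurableSet_Ioi]
  refine lintegral_congr fun t => ?_
  by_cases ht : 0 < t
  · simp [indicator, ht, div_eq_mul_inv]
  · simp [indicator, ht]

lemma setLIntegral_lorentzIntegrand_half_le (hq : 0 ≤ q) {y : ℝ → ℝ} :
    ∫⁻ t in Ioi (0 : ℝ), lorentzIntegrand p q t (y (t / 2))
      ≤ 2 * ENNReal.ofReal (2 ^ (1 / p)) ^ q *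
        ∫⁻ t in Ioi (0 : ℝ), lorentzIntegrand p q t (y t) := by
  have h := setLIntegral_Ioi_comp_half fun t => lorentzIntegrand p q (2 * t) (y t)
  simp only [mul_div_cancel₀ _ (two_ne_zero' ℝ)] at h
  rw [h, mul_assoc]
  gcongr
  have hC : ENNReal.ofReal (2 ^ (1 / p)) ^ q ≠ ⊤ :=
    ENNReal.rpow_ne_top_of_nonneg hq ENNReal.ofReal_ne_top
  rw [← lintegral_const_mul' _ _ hC]
  refine setLIntegral_mono' measurableSet_Ioi fun t (ht : 0 < t) => ?_
  unfold lorentzIntegrand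
  rw [Real.mul_rpow zero_le_two ht.le, mul_assoc, ENNReal.ofReal_mul (by positivity),
    ENNReal.mul_rpow_of_nonneg _ _ hq, mul_div_assoc]
  gcongr
  linarith

lemma exists_lorentzModular_add_le (μ : Measure α) (p : ℝ) (hq : 1 ≤ q) :
    ∃ C : ℝ≥0∞, C ≠ ⊤ ∧ ∀ u v : α → ℝ, Integrable u μ → Integrable v μ →
      lorentzModular μ (u + v) p q ≤ C * (lorentzModular μ u p q + lorentzModular μ v p q) := by
  have hq0 : 0 ≤ q := zero_le_one.trans hq
  have hD : (2 : ℝ≥0∞) ^ (q - 1) ≠ ⊤ :=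
    ENNReal.rpow_ne_top_of_nonneg (sub_nonneg.2 hq) ENNReal.ofNat_ne_top
  have hC : 2 * ENNReal.ofReal (2 ^ (1 / p)) ^ q ≠ ⊤ := ENNReal.mul_ne_top ENNReal.ofNat_ne_top
    (ENNReal.rpow_ne_top_of_nonneg hq0 ENNReal.ofReal_ne_top)
  refine ⟨2 ^ (q - 1) * (2 * ENNReal.ofReal (2 ^ (1 / p)) ^ q), ENNReal.mul_ne_top hD hC,
    fun u v hu hv => ?_⟩
  have hmeas : AEMeasurable (fun t => lorentzIntegrand p q t (decRearr μ u (t / 2)))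
      (volume.restrict (Ioi 0)) := by
    have h := aemeasurable_restrict_of_antitoneOn (μ := volume) (s := Ioi (0 : ℝ))
      (f := fun t => decRearr μ u (t / 2)) measurableSet_Ioi fun a ha b hb hab =>
        antitoneOn_decRearr hu (mem_Ioi.2 (half_pos ha)) (mem_Ioi.2 (half_pos hb))
          (by linarith)
    unfold lorentzIntegrand
    fun_prop
  calc lorentzModular μ (u + v) p q
      ≤ ∫⁻ t in Ioi (0 : ℝ), 2 ^ (q - 1) * (lorentzIntegrand p q t (decRearr μ u (t / 2))
          + lorentzIntegrand p q t (decRearr μ v (t / 2))) :=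
        setLIntegral_mono' measurableSet_Ioi fun t (ht : 0 < t) =>
          (lorentzIntegrand_mono hq0 ht.le (decRearr_add_le hu hv ht)).trans
            (lorentzIntegrand_add_le hq ht.le decRearr_nonneg decRearr_nonneg)
    _ ≤ _ := by
        rw [lintegral_const_mul' _ _ hD, lintegral_add_left' hmeas, mul_assoc]
        refine mul_le_mul_right ?_ _
        rw [mul_add]
        exact add_le_add (setLIntegral_lorentzIntegrand_half_le hq0)
          (setLIntegral_lorentzIntegrand_half_le hq0)

/-- Dominated convergence in Lorentz spaces. -/
lemma tendsto_lorentzModular_zero (hq : 0 < q) {u : ℕ → α → ℝ} (hu : ∀ k, Integrable (u k) μ)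
    (hlim : Filter.Tendsto (fun k => ∫ x, |u k x| ∂μ) Filter.atTop (nhds 0)) {G : ℝ → ℝ}
    (hG : ∀ k, ∀ t, 0 < t → decRearr μ (u k) t ≤ G t)
    (hfin : ∫⁻ t in Ioi (0 : ℝ), lorentzIntegrand p q t (G t) ≠ ⊤) :
    Filter.Tendsto (fun k => lorentzModular μ (u k) p q) Filter.atTop (nhds 0) := by
  have h := tendsto_lintegral_of_dominated_convergence' (μ := volume.restrict (Ioi (0 : ℝ)))
    (F := fun k t => lorentzIntegrand p q t (decRearr μ (u k) t)) (f := fun _ => 0)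
    (fun t => lorentzIntegrand p q t (G t)) (fun k => aemeasurable_lorentzIntegrand_decRearr (hu k))
    (fun k => (ae_restrict_mem measurableSet_Ioi).mono fun t (ht : 0 < t) =>
      lorentzIntegrand_mono hq.le ht.le (hG k t ht)) hfin
    ((ae_restrict_mem measurableSet_Ioi).mono fun t (ht : 0 < t) => ?_)
  · simpa [lorentzModular] using h
  have h1 : Filter.Tendsto (fun k => decRearr μ (u k) t) Filter.atTop (nhds 0) :=
    squeeze_zero (fun _ => decRearr_nonneg) (fun k => decRearr_le_integral_div (hu k) ht)
      (by simpa using hlim.div_const t)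
  have h2 := ((ENNReal.continuous_rpow_const (y := q)).tendsto _).comp
    (ENNReal.tendsto_ofReal (h1.const_mul (t ^ (1 / p))))
  have h3 := ENNReal.Tendsto.div_const h2
    (b := ENNReal.ofReal t) (Or.inr (by simpa using ht))
  simpa [lorentzIntegrand, Function.comp_def, hq] using h3

lemma setLIntegral_lorentzIntegrand_indicator_ne_top (hp : 0 < p) (hq : 0 < q) {B : ℝ}
    (hB : 0 ≤ B) (M : ℝ) :
    ∫⁻ t in Ioi (0 : ℝ), lorentzIntegrand p q t ((Iio M).indicator (fun _ => B) t) ≠ ⊤ := by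
  rcases le_or_gt M 0 with hM | hM
  · have : ∀ t ∈ Ioi (0 : ℝ), lorentzIntegrand p q t ((Iio M).indicator (fun _ => B) t) = 0 := by
      intro t (ht : 0 < t)
      simp [lorentzIntegrand, indicator, (hM.trans ht.le).not_gt, hq]
    rw [setLIntegral_congr_fun measurableSet_Ioi this]
    simp
  have hint : IntegrableOn (fun t : ℝ => B ^ q * t ^ (q / p - 1)) (Ioc 0 M) := by
    have h := intervalIntegral.intervalIntegrable_rpow' (a := 0) (b := M) (r := q / p - 1)
      (by linarith [div_pos hq hp])
    exact ((intervalIntegrable_iff_integrableOn_Ioc_of_le hM.le).1 h).const_mul _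
  refine ne_top_of_le_ne_top hint.lintegral_lt_top.ne ?_
  rw [← lintegral_indicator measurableSet_Ioc, ← lintegral_indicator measurableSet_Ioi]
  refine lintegral_mono fun t => ?_
  by_cases ht : 0 < t
  swap
  · simp [indicator, ht]
  by_cases htM : t < M
  · have h1 : ENNReal.ofReal (B ^ q * t ^ (q / p - 1))
        = ENNReal.ofReal (t ^ (1 / p) * B) ^ q / ENNReal.ofReal t := by
      rw [ENNReal.ofReal_rpow_of_nonneg (by positivity) hq.le, ← ENNReal.ofReal_div_of_pos ht,
        Real.mul_rpow (by positivity) hB, ← Real.rpow_mul ht.le, Real.rpow_sub_one ht.ne']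
      congr 1
      ring_nf
    simp [indicator, ht, htM, htM.le, h1, lorentzIntegrand]
  · simp [indicator, ht, htM, lorentzIntegrand, hq]

lemma tendsto_lorentzModular_zero_of_bounded [IsFiniteMeasure μ] (hp : 0 < p) (hq : 0 < q)
    {u : ℕ → α → ℝ} (hu : ∀ k, Integrable (u k) μ)
    (hlim : Filter.Tendsto (fun k => ∫ x, |u k x| ∂μ) Filter.atTop (nhds 0)) {B : ℝ}
    (hB : 0 ≤ B) (hb : ∀ k x, |u k x| ≤ B) :
    Filter.Tendsto (fun k => lorentzModular μ (u k) p q) Filter.atTop (nhds 0) :=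
  tendsto_lorentzModular_zero hq hu hlim
    (fun k _ _ => decRearr_le_indicator hB (hb k))
    (setLIntegral_lorentzIntegrand_indicator_ne_top hp hq hB (μ.real univ))

end Modular

section Truncation

/-- Truncation of a real number to the interval `[-N, N]`. -/
def truncReal (N y : ℝ) : ℝ := max (-N) (min y N)

variable {N : ℝ}

lemma lipschitzWith_truncReal (N : ℝ) : LipschitzWith 1 (truncReal N) :=
  (LipschitzWith.id.min_const N).const_max (-N)

lemma abs_truncReal_le (hN : 0 ≤ N) (y : ℝ) : |truncReal N y| ≤ N :=
  abs_le.2 ⟨le_max_left _ _, max_le (by linarith) (min_le_right _ _)⟩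

lemma truncReal_of_abs_le {y : ℝ} (h : |y| ≤ N) : truncReal N y = y := by
  rw [abs_le] at h
  rw [truncReal, min_eq_left h.2, max_eq_right h.1]

lemma abs_truncReal_sub_le (N y z : ℝ) : |truncReal N y - truncReal N z| ≤ |y - z| := by
  simpa [Real.dist_eq] using (lipschitzWith_truncReal N).dist_le_mul y z

lemma abs_sub_truncReal_le (hN : 0 ≤ N) (y : ℝ) : |y - truncReal N y| ≤ |y| := by
  unfold truncReal
  rcases le_total y N with h1 | h1
  · rw [min_eq_left h1]
    rcases le_total (-N) y with h2 | h2
    · simp [max_eq_right h2]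
    · rw [max_eq_left h2, abs_of_nonpos (by linarith), abs_of_nonpos (by linarith)]
      linarith
  · rw [min_eq_right h1, max_eq_right (by linarith), abs_of_nonneg (by linarith),
      abs_of_nonneg (by linarith)]
    linarith

variable {μ : Measure α} {f : α → ℝ} {p q : ℝ}

lemma Integrable.truncReal_comp [IsFiniteMeasure μ] (hf : AEStronglyMeasurable f μ)
    (hN : 0 ≤ N) : Integrable (fun x => truncReal N (f x)) μ :=
  .of_bound ((lipschitzWith_truncReal N).continuous.comp_aestronglyMeasurable hf) N
    (.of_forall fun x => abs_truncReal_le hN (f x))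

lemma tendsto_integral_abs_sub_truncReal (hf : Integrable f μ) :
    Filter.Tendsto (fun k : ℕ => ∫ x, |f x - truncReal k (f x)| ∂μ) Filter.atTop (nhds 0) := by
  have h := tendsto_integral_of_dominated_convergence (μ := μ)
    (F := fun (k : ℕ) x => |f x - truncReal k (f x)|) (f := fun _ => 0) (fun x => |f x|)
    (fun k => (hf.1.sub ((lipschitzWith_truncReal k).continuous.comp_aestronglyMeasurable
      hf.1)).norm) hf.abs
    (fun k => .of_forall fun x => by
      simpa using abs_sub_truncReal_le (Nat.cast_nonneg k) (f x))
    (.of_forall fun x => ?_)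
  · simpa using h
  obtain ⟨m, hm⟩ := exists_nat_ge |f x|
  refine tendsto_const_nhds.congr' ?_
  filter_upwards [Filter.eventually_ge_atTop m] with k hk
  rw [truncReal_of_abs_le (hm.trans (by exact_mod_cast hk))]
  simp

lemma tendsto_lorentzModular_sub_truncReal [IsFiniteMeasure μ] (hq : 0 < q)
    (hf : Integrable f μ) (hfin : lorentzModular μ f p q ≠ ⊤) :
    Filter.Tendsto (fun k : ℕ => lorentzModular μ (fun x => f x - truncReal k (f x)) p q)
      Filter.atTop (nhds 0) :=
  tendsto_lorentzModular_zero hq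
    (fun k => hf.sub (Integrable.truncReal_comp hf.1 k.cast_nonneg))
    (tendsto_integral_abs_sub_truncReal hf)
    (fun k _ ht => decRearr_mono hf ht fun x => abs_sub_truncReal_le k.cast_nonneg (f x)) hfin

end Truncation

section Density

variable {E : Type*} [NormedAddCommGroup E] [NormedSpace ℝ E] [FiniteDimensional ℝ E]
  [MeasurableSpace E] [BorelSpace E] {μ : Measure E} [IsFiniteMeasure μ] {p q : ℝ}

lemma exists_lipschitzWith_integral_abs_sub_le {w : E → ℝ} (hw : Integrable w μ) {N : ℝ}
    (hN : 0 ≤ N) (hwN : ∀ x, |w x| ≤ N) {δ : ℝ} (hδ : 0 < δ) :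
    ∃ (φ : E → ℝ) (K : ℝ≥0), LipschitzWith K φ ∧ (∀ x, |φ x| ≤ N) ∧ Integrable φ μ ∧
      ∫ x, |w x - φ x| ∂μ ≤ δ := by
  obtain ⟨g, hgs, hg, hgδ⟩ := (memLp_one_iff_integrable.2 hw).exist_eLpNorm_sub_le
    ENNReal.one_ne_top le_rfl hδ
  obtain ⟨K, hK⟩ := hg.lipschitzWith_of_hasCompactSupport hgs (by simp)
  have hgi : Integrable g μ := hg.continuous.integrable_of_hasCompactSupport hgs
  have hφi := Integrable.truncReal_comp hgi.1 hN
  refine ⟨fun x => truncReal N (g x), 1 * K, (lipschitzWith_truncReal N).comp hK,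
    fun x => abs_truncReal_le hN (g x), hφi, ?_⟩
  calc ∫ x, |w x - truncReal N (g x)| ∂μ ≤ ∫ x, |w x - g x| ∂μ := by
        refine integral_mono (hw.sub hφi).abs (hw.sub hgi).abs fun x => ?_
        have := abs_truncReal_sub_le N (w x) (g x)
        rwa [truncReal_of_abs_le (hwN x)] at this
    _ = (eLpNorm (w - g) 1 μ).toReal := by
        rw [eLpNorm_one_eq_lintegral_enorm]
        exact integral_norm_eq_lintegral_enorm (hw.sub hgi).1
    _ ≤ δ := ENNReal.toReal_le_of_le_ofReal hδ.le hgδ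

lemma exists_lipschitzWith_lorentzModular_sub_lt (hp : 0 < p) (hq : 0 < q) {w : E → ℝ}
    (hw : Integrable w μ) {N : ℝ} (hN : 0 ≤ N) (hwN : ∀ x, |w x| ≤ N) {δ : ℝ} (hδ : 0 < δ) :
    ∃ (φ : E → ℝ) (K : ℝ≥0), LipschitzWith K φ ∧ Integrable φ μ ∧
      ∫ x, |w x - φ x| ∂μ < δ ∧ lorentzModular μ (w - φ) p q < ENNReal.ofReal δ := by
  choose φ K hK hb hi hδφ using fun k : ℕ => exists_lipschitzWith_integral_abs_sub_le hw hN hwN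
    (Nat.one_div_pos_of_nat (α := ℝ) (n := k))
  have hlim : Filter.Tendsto (fun k => ∫ x, |w x - φ k x| ∂μ) Filter.atTop (nhds 0) :=
    squeeze_zero (fun _ => integral_nonneg fun _ => abs_nonneg _) hδφ
      tendsto_one_div_add_atTop_nhds_zero_nat
  have hmod : Filter.Tendsto (fun k => lorentzModular μ (w - φ k) p q) Filter.atTop (nhds 0) :=
    tendsto_lorentzModular_zero_of_bounded hp hq (fun k => hw.sub (hi k)) hlim
      (add_nonneg hN hN) fun k x => (abs_sub (w x) (φ k x)).trans (add_le_add (hwN x) (hb k x))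
  obtain ⟨k, h1, h2⟩ := ((hlim.eventually_lt_const hδ).and
    (hmod.eventually_lt_const (ENNReal.ofReal_pos.2 hδ))).exists
  exact ⟨φ k, K k, hK k, hi k, h1, h2⟩

lemma exists_lipschitzWith_integral_eq_zero_lorentzModular_sub_lt (hp : 0 < p) (hq : 1 ≤ q)
    {f : E → ℝ} (hf : Integrable f μ) (hfin : lorentzModular μ f p q ≠ ⊤)
    (hmean : ∫ x, f x ∂μ = 0) {η : ℝ≥0∞} (hη : 0 < η) :
    ∃ (g : E → ℝ) (K : ℝ≥0), LipschitzWith K g ∧ Integrable g μ ∧ ∫ x, g x ∂μ = 0 ∧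
      lorentzModular μ (f - g) p q < η := by
  have hq0 : 0 < q := zero_lt_one.trans_le hq
  have hT (k : ℕ) : Integrable (fun x => truncReal k (f x)) μ :=
    Integrable.truncReal_comp hf.1 k.cast_nonneg
  choose φ K hK hi hφL1 hφmod using fun k : ℕ => exists_lipschitzWith_lorentzModular_sub_lt
    (p := p) (q := q) hp hq0 (hT k) k.cast_nonneg (fun x => abs_truncReal_le k.cast_nonneg (f x))
    (Nat.one_div_pos_of_nat (α := ℝ) (n := k))
  set c : ℕ → ℝ := fun k => (∫ x, φ k x ∂μ) / μ.real univ with hc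
  have hone := tendsto_one_div_add_atTop_nhds_zero_nat (𝕜 := ℝ)
  have hφint : Filter.Tendsto (fun k => ∫ x, φ k x ∂μ) Filter.atTop (nhds 0) := by
    refine squeeze_zero_norm (fun k => ?_)
      (by simpa only [add_zero] using (tendsto_integral_abs_sub_truncReal hf).add hone)
    have h1 : ∫ x, φ k x ∂μ = -(∫ x, (f x - truncReal k (f x)) ∂μ)
        - ∫ x, (truncReal k (f x) - φ k x) ∂μ := by
      rw [integral_sub hf (hT k), integral_sub (hT k) (hi k), hmean]
      ring
    rw [h1, Real.norm_eq_abs]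
    refine (abs_sub _ _).trans (add_le_add ?_ ?_)
    · rw [abs_neg]
      exact abs_integral_le_integral_abs
    · exact abs_integral_le_integral_abs.trans (hφL1 k).le
  have hclim : Filter.Tendsto c Filter.atTop (nhds 0) := by
    simpa using hφint.div_const (μ.real univ)
  obtain ⟨B, hB⟩ := hclim.abs.bddAbove_range
  have hcB (k : ℕ) : |c k| ≤ B := hB (mem_range_self k)
  have hcmod : Filter.Tendsto (fun k => lorentzModular μ (fun _ : E => c k) p q)
      Filter.atTop (nhds 0) := by
    refine tendsto_lorentzModular_zero_of_bounded hp hq0 (fun _ => integrable_const _) ?_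
      ((abs_nonneg _).trans (hcB 0)) fun k _ => hcB k
    simpa using hclim.abs.const_mul (μ.real univ)
  obtain ⟨C, hC, hadd⟩ := exists_lorentzModular_add_le μ p hq
  have hφlim : Filter.Tendsto
      (fun k : ℕ => lorentzModular μ ((fun x => truncReal k (f x)) - φ k) p q)
      Filter.atTop (nhds 0) :=
    tendsto_of_tendsto_of_tendsto_of_le_of_le tendsto_const_nhds
      (by simpa only [ENNReal.ofReal_zero] using ENNReal.tendsto_ofReal hone)
      (fun _ => zero_le) fun k => (hφmod k).le
  have hlim := ENNReal.Tendsto.const_mul ((tendsto_lorentzModular_sub_truncReal hq0 hf hfin).add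
    (ENNReal.Tendsto.const_mul (hφlim.add hcmod) (Or.inr hC))) (Or.inr hC)
  simp only [add_zero, mul_zero] at hlim
  obtain ⟨k, hk⟩ := (hlim.eventually_lt_const hη).exists
  refine ⟨fun x => φ k x - c k, K k, ?_, (hi k).sub (integrable_const _), ?_, hk.trans_le' ?_⟩
  · exact LipschitzWith.of_dist_le_mul fun x y => by
      simpa using (hK k).dist_le_mul x y
  · rw [integral_sub (hi k) (integrable_const _), integral_const, smul_eq_mul]
    rcases eq_or_ne (μ.real univ) 0 with h0 | h0
    · have : μ = 0 := by simpa [measureReal_eq_zero_iff] using h0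
      simp [this]
    · simp only [hc]
      field_simp
      simp
  · have hsplit : f - (fun x => φ k x - c k) = (fun x => f x - truncReal k (f x))
        + (((fun x => truncReal k (f x)) - φ k) + fun _ => c k) := by
      ext x
      simp only [Pi.sub_apply, Pi.add_apply]
      ring
    rw [hsplit]
    refine (hadd _ _ (hf.sub (hT k)) (((hT k).sub (hi k)).add (integrable_const _))).trans ?_
    refine mul_le_mul_right (add_le_add le_rfl ?_) _
    exact hadd _ (fun _ => c k) ((hT k).sub (hi k)) (integrable_const _)

end Density

/-- Let `μ` be an `n`-Ahlfors regular measure on `ℝ^{n+1}` with compact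
support `X`, `1 < p < ∞` and `1 ≤ q ≤ p`. Lipschitz functions on `X` with zero `μ`-mean are
dense in the space of `L^{p,q}(μ)` functions with zero `μ`-mean. -/
theorem stmt_3 (n : ℕ) (C₀ p q : ℝ) (hp : 1 < p) (hq : 1 ≤ q) (hqp : q ≤ p)
    (μ : Measure (EuclideanSpace ℝ (Fin (n + 1)))) [IsFiniteMeasure μ]
    (hAR : IsAhlforsRegular μ n C₀) (hX : IsCompact (msupport μ)) :
    ∀ f : EuclideanSpace ℝ (Fin (n + 1)) → ℝ, Measurable f → lorentzNorm μ f p q < ⊤ →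
      Integrable f μ → (∫ x, f x ∂μ) = 0 →
      ∀ ε : ℝ, 0 < ε →
        ∃ (g : EuclideanSpace ℝ (Fin (n + 1)) → ℝ) (K : ℝ≥0),
          LipschitzOnWith K g (msupport μ) ∧ Integrable g μ ∧ (∫ x, g x ∂μ) = 0 ∧
          lorentzNorm μ (f - g) p q < ENNReal.ofReal ε := by
  intro f _ hfin hf hmean ε hε
  have hq0 : 0 < q := zero_lt_one.trans_le hq
  have hmod : lorentzModular μ f p q ≠ ⊤ := by
    intro h
    rw [lorentzNorm_eq_lorentzModular_rpow, h, ENNReal.top_rpow_of_pos (by positivity)] at hfin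
    exact hfin.ne rfl
  obtain ⟨g, K, hK, hg, hg0, hlt⟩ := exists_lipschitzWith_integral_eq_zero_lorentzModular_sub_lt
    (zero_lt_one.trans hp) hq hf hmod hmean
    (ENNReal.rpow_pos (p := q) (ENNReal.ofReal_pos.2 hε) ENNReal.ofReal_ne_top)
  refine ⟨g, K, hK.lipschitzOnWith, hg, hg0, ?_⟩
  rw [lorentzNorm_eq_lorentzModular_rpow]
  calc _ < (ENNReal.ofReal ε ^ q) ^ (1 / q) := ENNReal.rpow_lt_rpow hlt (by positivity)
    _ = ENNReal.ofReal ε := by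
      rw [← ENNReal.rpow_mul, mul_one_div_cancel hq0.ne', ENNReal.rpow_one]
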